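/- arXiv:2108.03646 — 2 statements merged into one kernel-verified Lean document; each statement's English description precedes it below -/
import Mathlib

section
/- Let Ω ⊂ ℝ² be a bounded open set and let Ω₀ be an open set with closure contained in Ω. Then there exists a constant C > 0, depending only on Ω and Ω₀, such that for every ϵ ∈ (0,1) with the closed ball B̄_{2ϵ^{1/3}} contained in Ω₀, and for every function g that is twice continuously differentiable on Ω with g, |∇g| and Δg square-integrable on Ω and Re ∫_Ω (Δg) · conj(g) dx dy ≤ 0, one has ∫_{B_ϵ} |∇g|² dx dy ≤ C ϵ^{4/3} ∫_Ω |−Δg + g|² dx dy. -/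
open MeasureTheory Real Set

noncomputable section

abbrev E2 : Type := EuclideanSpace ℝ (Fin 2)

/-- The point `(x, y)` in the Euclidean plane. -/
def pt (x y : ℝ) : E2 := !₂[x, y]

/-- The `i`-th partial derivative of `f : ℝ² → ℂ`. -/
def pd (i : Fin 2) (f : E2 → ℂ) (p : E2) : ℂ :=
  fderiv ℝ f p (EuclideanSpace.single i 1)

/-- `|∇f|²` at `p`, i.e. `|∂f/∂x|² + |∂f/∂y|²`. -/
def gradSq (f : E2 → ℂ) (p : E2) : ℝ :=
  ‖pd 0 f p‖ ^ 2 + ‖pd 1 f p‖ ^ 2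

/-- The Laplacian `Δf` at `p`. -/
def lap (f : E2 → ℂ) (p : E2) : ℂ :=
  pd 0 (pd 0 f) p + pd 1 (pd 1 f) p

/-- The point `(τ cos φ, τ sin φ)` on the circle of radius `τ`. -/
def circ (τ φ : ℝ) : E2 := pt (τ * Real.cos φ) (τ * Real.sin φ)

/-!
Let `u = χ g` with `χ` a cutoff equal to `1` near `closure Ω₀`. For compactly supported `u`,
interchanging derivatives under the integral gives `∫ |D²u|² = ∫ |Δu|²`. The Leibniz rule bounds
`Δu` by `g`, `∇g` and `Δg`, and `∇g` is removed by the Caccioppoli estimate: pairing a second cutoff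
`η` with the identity `Δ|g|² = 2 (⟨g, Δg⟩ + |∇g|²)` and moving `Δ` onto `η` bounds `∫ η |∇g|²` by
`∫ (|g|² + |Δg|²)`.

Each `∂ᵢu` thus lies in `H¹`, so it lies in `L⁶` by the Sobolev inequality with exponent `3/2`, and
Hölder's inequality on the ball `B_ϵ` gains the factor `|B_ϵ|^{2/3} ∼ ϵ^{4/3}`. Finally, the sign of
`Re ∫ Δg · conj g` makes the cross term of `|−Δg + g|²` nonnegative, so that
`∫ (|g|² + |Δg|²) ≤ ∫ |−Δg + g|²`.
-/

open Filter Topology Module InnerProductSpace Laplacian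
open scoped NNReal ENNReal Convolution

section DirectionalDerivative

variable {E F G W : Type*} [NormedAddCommGroup E] [NormedSpace ℝ E]
  [NormedAddCommGroup F] [NormedSpace ℝ F] [NormedAddCommGroup G] [NormedSpace ℝ G]
  [NormedAddCommGroup W] [NormedSpace ℝ W]

/-- The derivative of `f` in the direction `v`, as a function of the base point, so that it can be
iterated; it has the junk value `0` where `f` is not differentiable. -/
def dirDeriv (v : E) (f : E → F) (x : E) : F := fderiv ℝ f x v

lemma contDiffAt_dirDeriv {f : E → F} {n m : WithTop ℕ∞} {x : E} (hf : ContDiffAt ℝ n f x)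
    (hmn : m + 1 ≤ n) (v : E) : ContDiffAt ℝ m (dirDeriv v f) x :=
  (hf.fderiv_right hmn).clm_apply contDiffAt_const

lemma contDiff_dirDeriv {f : E → F} {n m : WithTop ℕ∞} (hf : ContDiff ℝ n f) (hmn : m + 1 ≤ n)
    (v : E) : ContDiff ℝ m (dirDeriv v f) :=
  contDiff_iff_contDiffAt.2 fun _ => contDiffAt_dirDeriv hf.contDiffAt hmn v

lemma continuous_dirDeriv {f : E → F} (hf : ContDiff ℝ 1 f) (v : E) : Continuous (dirDeriv v f) :=
  (contDiff_dirDeriv (m := 0) hf (by simp) v).continuous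

lemma hasCompactSupport_dirDeriv {f : E → F} (hf : HasCompactSupport f) (v : E) :
    HasCompactSupport (dirDeriv v f) :=
  hf.fderiv_apply ℝ v

lemma dirDeriv_eq_of_eventuallyEq {f g : E → F} {x : E} (hfg : f =ᶠ[𝓝 x] g) (v : E) :
    dirDeriv v f x = dirDeriv v g x := by
  rw [dirDeriv, hfg.fderiv_eq, dirDeriv]

lemma dirDeriv_dirDeriv_apply {f : E → F} {x : E} (hf : ContDiffAt ℝ 2 f x) (v w : E) :
    dirDeriv v (dirDeriv w f) x = fderiv ℝ (fderiv ℝ f) x v w := by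
  have hdiff : DifferentiableAt ℝ (fderiv ℝ f) x :=
    (hf.fderiv_right (m := 1) (by norm_num)).differentiableAt one_ne_zero
  unfold dirDeriv
  rw [fderiv_clm_apply hdiff (by fun_prop)]
  simp

lemma dirDeriv_comm {f : E → F} (hf : ContDiff ℝ 2 f) (v w : E) :
    dirDeriv v (dirDeriv w f) = dirDeriv w (dirDeriv v f) := by
  ext x
  rw [dirDeriv_dirDeriv_apply hf.contDiffAt, dirDeriv_dirDeriv_apply hf.contDiffAt]
  exact (hf.contDiffAt.isSymmSndFDerivAt (by simp)).eq v w

lemma dirDeriv_bilinear (B : F →L[ℝ] G →L[ℝ] W) {f : E → F} {g : E → G}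
    (hf : Differentiable ℝ f) (hg : Differentiable ℝ g) (v : E) :
    dirDeriv v (fun y => B (f y) (g y))
      = fun x => B (f x) (dirDeriv v g x) + B (dirDeriv v f x) (g x) := by
  ext x
  simp [dirDeriv, B.fderiv_of_bilinear (hf x) (hg x)]

lemma dirDeriv_comp_neg (v : E) (f : E → F) (x : E) :
    dirDeriv v (fun y => f (-y)) x = -dirDeriv v f (-x) := by
  have hneg := (ContinuousLinearEquiv.neg ℝ : E ≃L[ℝ] E).comp_right_fderiv (f := f) (x := x)
  simpa [dirDeriv, Function.comp_def] using congr($hneg v)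

lemma dirDeriv_dirDeriv_bilinear (B : F →L[ℝ] G →L[ℝ] W) {f : E → F} {g : E → G}
    (hf : ContDiff ℝ 2 f) (hg : ContDiff ℝ 2 g) (v : E) (x : E) :
    dirDeriv v (dirDeriv v fun y => B (f y) (g y)) x
      = B (f x) (dirDeriv v (dirDeriv v g) x) + (2 : ℝ) • B (dirDeriv v f x) (dirDeriv v g x)
        + B (dirDeriv v (dirDeriv v f) x) (g x) := by
  have hdf := hf.differentiable two_ne_zero
  have hdg := hg.differentiable two_ne_zero
  have hdf' := (contDiff_dirDeriv (m := 1) hf (by norm_num) v).differentiable one_ne_zero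
  have hdg' := (contDiff_dirDeriv (m := 1) hg (by norm_num) v).differentiable one_ne_zero
  have hadd : dirDeriv v (fun x => B (f x) (dirDeriv v g x) + B (dirDeriv v f x) (g x)) x
      = dirDeriv v (fun x => B (f x) (dirDeriv v g x)) x
        + dirDeriv v (fun x => B (dirDeriv v f x) (g x)) x := by
    unfold dirDeriv at *
    rw [fderiv_fun_add (by fun_prop) (by fun_prop), add_apply]
  rw [dirDeriv_bilinear B hdf hdg, hadd, dirDeriv_bilinear B hdf hdg',
    dirDeriv_bilinear B hdf' hdg]
  module

end DirectionalDerivative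

section CompactSupport

lemma exists_forall_le_of_isCompact {X : Type*} [TopologicalSpace X] {K : Set X}
    (hK : IsCompact K) {φ : X → ℝ} (hφ : ContinuousOn φ K) : ∃ M > 0, ∀ x ∈ K, φ x ≤ M := by
  obtain ⟨M, hM⟩ := hK.bddAbove_image hφ
  exact ⟨max M 1, by positivity, fun x hx => (hM (mem_image_of_mem φ hx)).trans (le_max_left _ _)⟩

variable {X F G W : Type*} [TopologicalSpace X] [MeasurableSpace X] [OpensMeasurableSpace X]
  {μ : Measure X} [IsFiniteMeasureOnCompacts μ]
  [NormedAddCommGroup F] [NormedSpace ℝ F] [NormedAddCommGroup G] [NormedSpace ℝ G]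
  [NormedAddCommGroup W] [NormedSpace ℝ W]

lemma integrable_bilinear_of_hasCompactSupport_left (B : F →L[ℝ] G →L[ℝ] W) {f : X → F}
    {g : X → G} (hf : Continuous f) (hg : Continuous g) (hf_supp : HasCompactSupport f) :
    Integrable (fun x => B (f x) (g x)) μ :=
  Continuous.integrable_of_hasCompactSupport (by fun_prop)
    (hf_supp.mono fun x hx hfx => hx (by simp [hfx]))

end CompactSupport

section IntegrationByParts

variable {E F G W : Type*} [NormedAddCommGroup E] [NormedSpace ℝ E] [FiniteDimensional ℝ E]
  [MeasurableSpace E] [BorelSpace E] {μ : Measure E} [μ.IsAddHaarMeasure]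
  [NormedAddCommGroup F] [NormedSpace ℝ F] [NormedAddCommGroup G] [NormedSpace ℝ G]
  [NormedAddCommGroup W] [NormedSpace ℝ W]

lemma integral_bilinear_dirDeriv_right (B : F →L[ℝ] G →L[ℝ] W) {f : E → F} {g : E → G}
    (hf : ContDiff ℝ 1 f) (hg : ContDiff ℝ 1 g) (hf_supp : HasCompactSupport f) (v : E) :
    ∫ x, B (f x) (dirDeriv v g x) ∂μ = -∫ x, B (dirDeriv v f x) (g x) ∂μ :=
  integral_bilinear_fderiv_right_eq_neg_left_of_integrable
    (integrable_bilinear_of_hasCompactSupport_left B (continuous_dirDeriv hf v) hg.continuous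
      (hasCompactSupport_dirDeriv hf_supp v))
    (integrable_bilinear_of_hasCompactSupport_left B hf.continuous (continuous_dirDeriv hg v)
      hf_supp)
    (integrable_bilinear_of_hasCompactSupport_left B hf.continuous hg.continuous hf_supp)
    (fun x _ => hf.differentiable one_ne_zero x) (fun x _ => hg.differentiable one_ne_zero x)

lemma dirDeriv_convolution_right (B : F →L[ℝ] G →L[ℝ] W) {f : E → F} {g : E → G}
    (hf : LocallyIntegrable f μ) (hg : ContDiff ℝ 1 g) (hg_supp : HasCompactSupport g) (v : E) :
    dirDeriv v (f ⋆[B, μ] g) = f ⋆[B, μ] dirDeriv v g := by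
  ext x
  rw [dirDeriv, (hg_supp.hasFDerivAt_convolution_right B hf hg x).fderiv]
  exact convolution_precompR_apply B hf (hg_supp.fderiv ℝ) (hg.continuous_fderiv one_ne_zero) x v

lemma dirDeriv_convolution_left (B : F →L[ℝ] G →L[ℝ] W) {f : E → F} {g : E → G}
    (hf : ContDiff ℝ 1 f) (hf_supp : HasCompactSupport f) (hg : LocallyIntegrable g μ) (v : E) :
    dirDeriv v (f ⋆[B, μ] g) = dirDeriv v f ⋆[B, μ] g := by
  rw [← convolution_flip, dirDeriv_convolution_right B.flip hg hf hf_supp, convolution_flip]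

lemma convolution_dirDeriv_dirDeriv_swap (B : F →L[ℝ] G →L[ℝ] W) {f : E → F} {g : E → G}
    (hf : ContDiff ℝ 1 f) (hg : ContDiff ℝ 1 g) (hf_supp : HasCompactSupport f)
    (hg_supp : HasCompactSupport g) (v w : E) :
    dirDeriv v f ⋆[B, μ] dirDeriv w g = dirDeriv w f ⋆[B, μ] dirDeriv v g := by
  rw [← dirDeriv_convolution_left B hf hf_supp (continuous_dirDeriv hg w).locallyIntegrable v,
    ← dirDeriv_convolution_right B hf.continuous.locallyIntegrable hg hg_supp w,
    dirDeriv_convolution_left B hf hf_supp hg.continuous.locallyIntegrable w,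
    dirDeriv_convolution_right B (continuous_dirDeriv hf w).locallyIntegrable hg hg_supp v]

/-- Read off from a convolution at `0`, because integrating by parts directly would require second
derivatives of `f` or `g`. -/
lemma integral_bilinear_dirDeriv_dirDeriv_swap (B : F →L[ℝ] G →L[ℝ] W) {f : E → F} {g : E → G}
    (hf : ContDiff ℝ 1 f) (hg : ContDiff ℝ 1 g) (hf_supp : HasCompactSupport f)
    (hg_supp : HasCompactSupport g) (v w : E) :
    ∫ x, B (dirDeriv v f x) (dirDeriv w g x) ∂μ
      = ∫ x, B (dirDeriv w f x) (dirDeriv v g x) ∂μ := by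
  have hswap := congrFun (convolution_dirDeriv_dirDeriv_swap (μ := μ) B hf
    (hg.comp contDiff_neg) hf_supp (hg_supp.comp_homeomorph (Homeomorph.neg E)) v w) 0
  simpa [convolution_def, Function.comp_def, dirDeriv_comp_neg, integral_neg] using hswap

end IntegrationByParts

section Laplacian

variable {E F G W ι : Type*} [NormedAddCommGroup E] [InnerProductSpace ℝ E] [Fintype ι]
  [NormedAddCommGroup F] [NormedSpace ℝ F] [NormedAddCommGroup G] [NormedSpace ℝ G]
  [NormedAddCommGroup W] [NormedSpace ℝ W] (b : OrthonormalBasis ι ℝ E)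

/-- The squared Hilbert–Schmidt norm `|∇f|²` of the derivative of `f`, in the coordinates of the
orthonormal basis `b`; for `f` scalar it is the squared norm of the gradient. -/
def gradNormSq (f : E → F) (x : E) : ℝ := ∑ i, ‖dirDeriv (b i) f x‖ ^ 2

lemma gradNormSq_nonneg (f : E → F) (x : E) : 0 ≤ gradNormSq b f x :=
  Finset.sum_nonneg fun _ _ => sq_nonneg _

lemma gradNormSq_eq_of_eventuallyEq {f g : E → F} {x : E} (hfg : f =ᶠ[𝓝 x] g) :
    gradNormSq b f x = gradNormSq b g x := by
  simp only [gradNormSq, dirDeriv_eq_of_eventuallyEq hfg]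

lemma continuous_gradNormSq {f : E → F} (hf : ContDiff ℝ 1 f) : Continuous (gradNormSq b f) :=
  continuous_finsetSum _ fun i _ => (continuous_dirDeriv hf (b i)).norm.pow 2

lemma hasCompactSupport_gradNormSq {f : E → F} (hf : HasCompactSupport f) :
    HasCompactSupport (gradNormSq b f) :=
  hf.mono' fun x hx => by
    contrapose! hx
    simp [gradNormSq, dirDeriv, fderiv_of_notMem_tsupport (𝕜 := ℝ) hx]

lemma norm_fderiv_sq_le_gradNormSq (f : E → F) (x : E) :
    ‖fderiv ℝ f x‖ ^ 2 ≤ gradNormSq b f x := by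
  refine Real.le_sqrt (norm_nonneg _) (gradNormSq_nonneg b f x) |>.1 ?_
  refine ContinuousLinearMap.opNorm_le_bound _ (Real.sqrt_nonneg _) fun v => ?_
  calc ‖fderiv ℝ f x v‖ = ‖∑ i, b.repr v i • dirDeriv (b i) f x‖ := by
        conv_lhs => rw [← b.sum_repr v, map_sum]
        simp only [map_smul, dirDeriv]
    _ ≤ ∑ i, ‖dirDeriv (b i) f x‖ * ‖b.repr v i‖ :=
        norm_sum_le_of_le _ fun i _ => by rw [norm_smul, mul_comm]
    _ ≤ √(gradNormSq b f x) * √(∑ i, ‖b.repr v i‖ ^ 2) := Real.sum_mul_le_sqrt_mul_sqrt _ _ _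
    _ = √(gradNormSq b f x) * ‖v‖ := by rw [← EuclideanSpace.norm_eq, b.repr.norm_map]

variable [FiniteDimensional ℝ E]

lemma laplacian_eq_sum_dirDeriv {f : E → F} {x : E} (hf : ContDiffAt ℝ 2 f x) :
    Δ f x = ∑ i, dirDeriv (b i) (dirDeriv (b i) f) x := by
  simp [laplacian_eq_iteratedFDeriv_orthonormalBasis f b, iteratedFDeriv_two_apply,
    dirDeriv_dirDeriv_apply hf]

lemma continuousAt_laplacian {f : E → F} {x : E} (hf : ContDiffAt ℝ 2 f x) :
    ContinuousAt (Δ f) x := by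
  let b := stdOrthonormalBasis ℝ E
  have hsum : Δ f =ᶠ[𝓝 x] fun y => ∑ i, dirDeriv (b i) (dirDeriv (b i) f) y :=
    (hf.eventually (by simp)).mono fun y hy => laplacian_eq_sum_dirDeriv b hy
  refine ContinuousAt.congr (tendsto_finsetSum _ fun i _ => ?_) hsum.symm
  have hderiv := contDiffAt_dirDeriv (m := 1) hf (by norm_num) (b i)
  exact (contDiffAt_dirDeriv (m := 0) hderiv (by simp) (b i)).continuousAt

lemma continuousOn_laplacian {f : E → F} {U : Set E} (hf : ContDiffOn ℝ 2 f U) (hU : IsOpen U) :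
    ContinuousOn (Δ f) U := fun _ hx =>
  (continuousAt_laplacian (hf.contDiffAt (hU.mem_nhds hx))).continuousWithinAt

lemma continuous_laplacian {f : E → F} (hf : ContDiff ℝ 2 f) : Continuous (Δ f) :=
  continuous_iff_continuousAt.2 fun _ => continuousAt_laplacian hf.contDiffAt

lemma support_laplacian_subset (f : E → F) : Function.support (Δ f) ⊆ tsupport f := by
  intro x hx
  contrapose! hx
  have hzero := (laplacian_congr_nhds (notMem_tsupport_iff_eventuallyEq.1 hx)).eq_of_nhds
  exact Function.notMem_support.2 (hzero.trans (congrFun laplacian_const x))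

lemma hasCompactSupport_laplacian {f : E → F} (hf : HasCompactSupport f) :
    HasCompactSupport (Δ f) :=
  hf.mono' (support_laplacian_subset f)

lemma laplacian_bilinear (B : F →L[ℝ] G →L[ℝ] W) {f : E → F} {g : E → G}
    (hf : ContDiff ℝ 2 f) (hg : ContDiff ℝ 2 g) (x : E) :
    Δ (fun y => B (f y) (g y)) x
      = B (f x) (Δ g x) + (2 : ℝ) • ∑ i, B (dirDeriv (b i) f x) (dirDeriv (b i) g x)
        + B (Δ f x) (g x) := by
  have hB : ContDiff ℝ 2 fun y => B (f y) (g y) := by fun_prop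
  simp only [laplacian_eq_sum_dirDeriv b hB.contDiffAt, laplacian_eq_sum_dirDeriv b hf.contDiffAt,
    laplacian_eq_sum_dirDeriv b hg.contDiffAt, dirDeriv_dirDeriv_bilinear B hf hg,
    Finset.sum_add_distrib, Finset.smul_sum, map_sum, sum_apply]

lemma laplacian_norm_sq {H : Type*} [NormedAddCommGroup H] [InnerProductSpace ℝ H] {a : E → H}
    (ha : ContDiff ℝ 2 a) (x : E) :
    Δ (fun y => ‖a y‖ ^ 2) x = 2 * (⟪a x, Δ a x⟫_ℝ + gradNormSq b a x) := by
  have hexpand : Δ (fun y => ⟪a y, a y⟫_ℝ) x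
      = ⟪a x, Δ a x⟫_ℝ + 2 * ∑ i, ⟪dirDeriv (b i) a x, dirDeriv (b i) a x⟫_ℝ + ⟪Δ a x, a x⟫_ℝ :=
    laplacian_bilinear b (innerSL ℝ) ha ha x
  simp only [real_inner_self_eq_norm_sq, real_inner_comm (a x)] at hexpand
  rw [hexpand, gradNormSq, real_inner_comm]
  ring

lemma laplacian_smul_apply {χ : E → ℝ} {a : E → F} (hχ : ContDiff ℝ 2 χ) (ha : ContDiff ℝ 2 a)
    (x : E) :
    Δ (χ • a) x = χ x • Δ a x + (2 : ℝ) • ∑ i, dirDeriv (b i) χ x • dirDeriv (b i) a x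
      + Δ χ x • a x :=
  laplacian_bilinear b (ContinuousLinearMap.lsmul ℝ ℝ) hχ ha x

lemma norm_laplacian_smul_sq_le {χ : E → ℝ} {a : E → F} (hχ : ContDiff ℝ 2 χ)
    (ha : ContDiff ℝ 2 a) (x : E) :
    ‖Δ (χ • a) x‖ ^ 2 ≤ 3 * (χ x ^ 2 + 4 * gradNormSq b χ x + Δ χ x ^ 2)
      * (gradNormSq b a x + (‖a x‖ ^ 2 + ‖Δ a x‖ ^ 2)) := by
  set S := ∑ i, dirDeriv (b i) χ x • dirDeriv (b i) a x with hS
  have hcauchy : ‖S‖ ^ 2 ≤ gradNormSq b χ x * gradNormSq b a x :=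
    calc ‖S‖ ^ 2 ≤ (∑ i, ‖dirDeriv (b i) χ x‖ * ‖dirDeriv (b i) a x‖) ^ 2 := by
          gcongr
          exact norm_sum_le_of_le _ fun i _ => (norm_smul _ _).le
      _ ≤ gradNormSq b χ x * gradNormSq b a x := Finset.sum_mul_sq_le_sq_mul_sq _ _ _
  have htriangle : ‖Δ (χ • a) x‖ ≤ |χ x| * ‖Δ a x‖ + 2 * ‖S‖ + |Δ χ x| * ‖a x‖ := by
    rw [laplacian_smul_apply b hχ ha, ← hS]
    refine (norm_add₃_le ..).trans_eq ?_
    simp [norm_smul]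
  have hgrad_χ := gradNormSq_nonneg b χ x
  have hgrad_a := gradNormSq_nonneg b a x
  calc ‖Δ (χ • a) x‖ ^ 2 ≤ (|χ x| * ‖Δ a x‖ + 2 * ‖S‖ + |Δ χ x| * ‖a x‖) ^ 2 := by gcongr
    _ ≤ 3 * ((|χ x| * ‖Δ a x‖) ^ 2 + (2 * ‖S‖) ^ 2 + (|Δ χ x| * ‖a x‖) ^ 2) := by
        simpa [Fin.sum_univ_three] using sq_sum_le_card_mul_sum_sq (s := Finset.univ)
          (f := ![|χ x| * ‖Δ a x‖, 2 * ‖S‖, |Δ χ x| * ‖a x‖])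
    _ ≤ 3 * (χ x ^ 2 * ‖Δ a x‖ ^ 2 + 4 * (gradNormSq b χ x * gradNormSq b a x)
          + Δ χ x ^ 2 * ‖a x‖ ^ 2) := by
        rw [mul_pow, mul_pow, mul_pow, sq_abs, sq_abs]
        linarith
    _ ≤ _ := by
        rw [mul_assoc]
        gcongr
        nlinarith [mul_nonneg (sq_nonneg (χ x)) hgrad_a, mul_nonneg (sq_nonneg (Δ χ x)) hgrad_a,
          mul_nonneg hgrad_χ (sq_nonneg ‖a x‖), mul_nonneg hgrad_χ (sq_nonneg ‖Δ a x‖),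
          mul_nonneg (sq_nonneg (χ x)) (sq_nonneg ‖a x‖),
          mul_nonneg (sq_nonneg (Δ χ x)) (sq_nonneg ‖Δ a x‖)]

end Laplacian

section Green

variable {E F G W : Type*} [NormedAddCommGroup E] [InnerProductSpace ℝ E]
  [FiniteDimensional ℝ E] [MeasurableSpace E] [BorelSpace E] {μ : Measure E} [μ.IsAddHaarMeasure]
  [NormedAddCommGroup F] [NormedSpace ℝ F] [NormedAddCommGroup G] [NormedSpace ℝ G]
  [NormedAddCommGroup W] [NormedSpace ℝ W]

lemma integral_bilinear_laplacian_right (B : F →L[ℝ] G →L[ℝ] W) {f : E → F} {g : E → G}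
    (hf : ContDiff ℝ 2 f) (hg : ContDiff ℝ 2 g) (hf_supp : HasCompactSupport f) :
    ∫ x, B (f x) (Δ g x) ∂μ = ∫ x, B (Δ f x) (g x) ∂μ := by
  let b := stdOrthonormalBasis ℝ E
  have hf' i : ContDiff ℝ 1 (dirDeriv (b i) f) := contDiff_dirDeriv hf (by norm_num) _
  have hg' i : ContDiff ℝ 1 (dirDeriv (b i) g) := contDiff_dirDeriv hg (by norm_num) _
  have hf_supp' i := hasCompactSupport_dirDeriv hf_supp (b i)
  have hparts i : ∫ x, B (f x) (dirDeriv (b i) (dirDeriv (b i) g) x) ∂μ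
      = ∫ x, B (dirDeriv (b i) (dirDeriv (b i) f) x) (g x) ∂μ := by
    rw [integral_bilinear_dirDeriv_right B (hf.of_le one_le_two) (hg' i) hf_supp, eq_comm,
      ← neg_eq_iff_eq_neg,
      ← integral_bilinear_dirDeriv_right B (hf' i) (hg.of_le one_le_two) (hf_supp' i)]
  simp only [laplacian_eq_sum_dirDeriv b hf.contDiffAt, laplacian_eq_sum_dirDeriv b hg.contDiffAt,
    map_sum, sum_apply]
  rw [integral_finsetSum, integral_finsetSum]
  · exact Finset.sum_congr rfl fun i _ => hparts i
  · exact fun i _ => integrable_bilinear_of_hasCompactSupport_left B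
      (continuous_dirDeriv (hf' i) _) hg.continuous (hasCompactSupport_dirDeriv (hf_supp' i) _)
  · exact fun i _ => integrable_bilinear_of_hasCompactSupport_left B
      hf.continuous (continuous_dirDeriv (hg' i) _) hf_supp

end Green

section EnergyEstimates

variable {E F ι : Type*} [NormedAddCommGroup E] [InnerProductSpace ℝ E]
  [FiniteDimensional ℝ E] [MeasurableSpace E] [BorelSpace E] {μ : Measure E} [Fintype ι]
  [NormedAddCommGroup F] [InnerProductSpace ℝ F] (b : OrthonormalBasis ι ℝ E)

lemma integral_norm_laplacian_sq [μ.IsAddHaarMeasure] {u : E → F} (hu : ContDiff ℝ 2 u)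
    (hu_supp : HasCompactSupport u) :
    ∫ x, ‖Δ u x‖ ^ 2 ∂μ = ∑ i, ∫ x, gradNormSq b (dirDeriv (b i) u) x ∂μ := by
  have hu' i : ContDiff ℝ 1 (dirDeriv (b i) u) := contDiff_dirDeriv hu (by norm_num) _
  have hu_supp' i := hasCompactSupport_dirDeriv hu_supp (b i)
  have hcont i j := continuous_dirDeriv (hu' i) (b j)
  have hint i j k l : Integrable (fun x => innerSL ℝ (dirDeriv (b i) (dirDeriv (b j) u) x)
      (dirDeriv (b k) (dirDeriv (b l) u) x)) μ :=
    integrable_bilinear_of_hasCompactSupport_left _ (hcont j i) (hcont l k)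
      (hasCompactSupport_dirDeriv (hu_supp' j) _)
  have hexpand x : ‖Δ u x‖ ^ 2 = ∑ i, ∑ j, innerSL ℝ (dirDeriv (b i) (dirDeriv (b i) u) x)
      (dirDeriv (b j) (dirDeriv (b j) u) x) := by
    simp only [← real_inner_self_eq_norm_sq, laplacian_eq_sum_dirDeriv b hu.contDiffAt, sum_inner,
      inner_sum]
    exact Finset.sum_comm
  have hnorm i x : gradNormSq b (dirDeriv (b i) u) x
      = ∑ j, innerSL ℝ (dirDeriv (b j) (dirDeriv (b i) u) x)
        (dirDeriv (b j) (dirDeriv (b i) u) x) := by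
    simp [gradNormSq]
  simp only [hexpand, hnorm]
  rw [integral_finsetSum _ fun i _ => integrable_finsetSum _ fun j _ => hint i i j j]
  refine Finset.sum_congr rfl fun i _ => ?_
  rw [integral_finsetSum _ fun j _ => hint i i j j, integral_finsetSum _ fun j _ => hint j i j i]
  refine Finset.sum_congr rfl fun j _ => ?_
  rw [integral_bilinear_dirDeriv_dirDeriv_swap _ (hu' i) (hu' j) (hu_supp' i) (hu_supp' j),
    dirDeriv_comm hu (b i) (b j)]

lemma integral_mul_gradNormSq [μ.IsAddHaarMeasure] {η : E → ℝ} {a : E → F}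
    (hη : ContDiff ℝ 2 η) (hη_supp : HasCompactSupport η) (ha : ContDiff ℝ 2 a) :
    ∫ x, η x * gradNormSq b a x ∂μ
      = ∫ x, (Δ η x * ‖a x‖ ^ 2 / 2 - η x * ⟪a x, Δ a x⟫_ℝ) ∂μ := by
  have hgreen := integral_bilinear_laplacian_right (μ := μ) (ContinuousLinearMap.mul ℝ ℝ) hη
    (ha.norm_sq ℝ) hη_supp
  simp only [ContinuousLinearMap.mul_apply', laplacian_norm_sq b ha] at hgreen
  have hcont_a := ha.continuous
  have hcont_Δa := continuous_laplacian ha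
  have hint_grad : Integrable (fun x => η x * gradNormSq b a x) μ :=
    integrable_bilinear_of_hasCompactSupport_left (ContinuousLinearMap.mul ℝ ℝ) hη.continuous
      (continuous_gradNormSq b (ha.of_le one_le_two)) hη_supp
  have hint_inner : Integrable (fun x => η x * ⟪a x, Δ a x⟫_ℝ) μ :=
    integrable_bilinear_of_hasCompactSupport_left (ContinuousLinearMap.mul ℝ ℝ) hη.continuous
      (hcont_a.inner hcont_Δa) hη_supp
  have hint_norm : Integrable (fun x => Δ η x * ‖a x‖ ^ 2) μ :=
    integrable_bilinear_of_hasCompactSupport_left (ContinuousLinearMap.mul ℝ ℝ)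
      (continuous_laplacian hη) (hcont_a.norm.pow 2) (hasCompactSupport_laplacian hη_supp)
  have hsplit : ∫ x, η x * (2 * (⟪a x, Δ a x⟫_ℝ + gradNormSq b a x)) ∂μ
      = 2 * (∫ x, η x * ⟪a x, Δ a x⟫_ℝ ∂μ + ∫ x, η x * gradNormSq b a x ∂μ) := by
    rw [← integral_add hint_inner hint_grad, ← integral_const_mul]
    congr with x
    ring
  rw [integral_sub (hint_norm.div_const 2) hint_inner, integral_div]
  linarith

lemma exists_integral_mul_gradNormSq_le [μ.IsAddHaarMeasure] {η : E → ℝ} (hη : ContDiff ℝ 2 η)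
    (hη_supp : HasCompactSupport η) :
    ∃ C > 0, ∀ a : E → F, ContDiff ℝ 2 a → ∫ x, η x * gradNormSq b a x ∂μ
      ≤ C * ∫ x in tsupport η, (‖a x‖ ^ 2 + ‖Δ a x‖ ^ 2) ∂μ := by
  have hcont_η := hη.continuous
  have hcont_Δη := continuous_laplacian hη
  obtain ⟨M, hM_pos, hM⟩ := exists_forall_le_of_isCompact (K := tsupport η) hη_supp
    (φ := fun x => |η x| + |Δ η x|) (by fun_prop)
  refine ⟨M, hM_pos, fun a ha => ?_⟩
  have hcont_a := ha.continuous
  have hcont_Δa := continuous_laplacian ha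
  have hvanish : ∀ x ∉ tsupport η, Δ η x * ‖a x‖ ^ 2 / 2 - η x * ⟪a x, Δ a x⟫_ℝ = 0 := by
    intro x hx
    simp [image_eq_zero_of_notMem_tsupport hx,
      Function.notMem_support.1 fun h => hx (support_laplacian_subset η h)]
  have hpointwise : ∀ x ∈ tsupport η, Δ η x * ‖a x‖ ^ 2 / 2 - η x * ⟪a x, Δ a x⟫_ℝ
      ≤ M * (‖a x‖ ^ 2 + ‖Δ a x‖ ^ 2) := by
    intro x hx
    have hinner : |η x * ⟪a x, Δ a x⟫_ℝ| ≤ |η x| * (‖a x‖ ^ 2 + ‖Δ a x‖ ^ 2) := by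
      rw [abs_mul]
      gcongr
      nlinarith [abs_real_inner_le_norm (a x) (Δ a x), sq_nonneg (‖a x‖ - ‖Δ a x‖)]
    have hnorm : Δ η x * ‖a x‖ ^ 2 / 2 ≤ |Δ η x| * (‖a x‖ ^ 2 + ‖Δ a x‖ ^ 2) := by
      nlinarith [le_abs_self (Δ η x), abs_nonneg (Δ η x), sq_nonneg ‖a x‖, sq_nonneg ‖Δ a x‖]
    nlinarith [neg_abs_le (η x * ⟪a x, Δ a x⟫_ℝ), hM x hx, sq_nonneg ‖a x‖, sq_nonneg ‖Δ a x‖]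
  rw [integral_mul_gradNormSq b hη hη_supp ha,
    ← setIntegral_eq_integral_of_forall_compl_eq_zero hvanish, ← integral_const_mul]
  refine setIntegral_mono_on ?_ ?_ hη_supp.measurableSet hpointwise
  all_goals exact ContinuousOn.integrableOn_compact hη_supp (by fun_prop)

end EnergyEstimates

section Cutoff

variable {E F : Type*} [NormedAddCommGroup E] [NormedSpace ℝ E] [FiniteDimensional ℝ E]
  [NormedAddCommGroup F] [NormedSpace ℝ F]

open scoped Manifold ContDiff in
lemma exists_contDiff_tsupport_subset_eq_one {K U : Set E} (hK : IsCompact K) (hU : IsOpen U)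
    (hKU : K ⊆ U) (n : ℕ∞) :
    ∃ χ : E → ℝ, ContDiff ℝ n χ ∧ HasCompactSupport χ ∧ tsupport χ ⊆ U ∧
      (∀ᶠ x in 𝓝ˢ K, χ x = 1) ∧ ∀ x, 0 ≤ χ x := by
  obtain ⟨T, hT, hKT, hTU⟩ := exists_compact_between hK hU hKU
  obtain ⟨χ, hχ_one, hχ_zero, hχ_Icc⟩ := exists_contMDiffMap_one_nhds_of_subset_interior (n := n)
    𝓘(ℝ, E) hK.isClosed hKT
  have hχT : tsupport χ ⊆ T :=
    closure_minimal (fun x hx => not_imp_comm.1 (hχ_zero x) hx) hT.isClosed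
  exact ⟨χ, χ.contMDiff.contDiff, hT.of_isClosed_subset (isClosed_tsupport _) hχT,
    hχT.trans hTU, hχ_one, fun x => (hχ_Icc x).1⟩

lemma exists_contDiff_eventuallyEq_of_contDiffOn {K U : Set E} (hK : IsCompact K)
    (hU : IsOpen U) (hKU : K ⊆ U) {n : ℕ∞} {g : E → F} (hg : ContDiffOn ℝ n g U) :
    ∃ f : E → F, ContDiff ℝ n f ∧ ∀ x ∈ K, f =ᶠ[𝓝 x] g := by
  obtain ⟨χ, hχ, -, hχU, hχ_one, -⟩ := exists_contDiff_tsupport_subset_eq_one hK hU hKU n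
  refine ⟨χ • g, contDiff_iff_contDiffAt.2 fun x => ?_, fun x hx => ?_⟩
  · by_cases hx : x ∈ tsupport χ
    · exact hχ.contDiffAt.smul (hg.contDiffAt (hU.mem_nhds (hχU hx)))
    · refine (contDiffAt_const (c := (0 : F))).congr_of_eventuallyEq ?_
      filter_upwards [notMem_tsupport_iff_eventuallyEq.1 hx] with y hy
      simp [hy]
  · filter_upwards [eventually_nhdsSet_iff_forall.1 hχ_one x hx] with y hy
    simp [hy]

end Cutoff

section InteriorEstimate

variable {E F ι : Type*} [NormedAddCommGroup E] [InnerProductSpace ℝ E]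
  [FiniteDimensional ℝ E] [MeasurableSpace E] [BorelSpace E] {μ : Measure E} [μ.IsAddHaarMeasure]
  [Fintype ι] [NormedAddCommGroup F] [InnerProductSpace ℝ F] (b : OrthonormalBasis ι ℝ E)

lemma exists_setIntegral_gradNormSq_le {K Ω : Set E} (hK : IsCompact K) (hΩ : IsOpen Ω)
    (hKΩ : K ⊆ Ω) :
    ∃ C > 0, ∃ L : Set E, IsCompact L ∧ K ⊆ L ∧ L ⊆ Ω ∧ ∀ a : E → F, ContDiff ℝ 2 a →
      ∫ x in K, gradNormSq b a x ∂μ ≤ C * ∫ x in L, (‖a x‖ ^ 2 + ‖Δ a x‖ ^ 2) ∂μ := by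
  obtain ⟨η, hη, hη_supp, hηΩ, hη_one, hη_nonneg⟩ :=
    exists_contDiff_tsupport_subset_eq_one hK hΩ hKΩ 2
  have hη_one_on : ∀ x ∈ K, η x = 1 := fun x hx => hη_one.self_of_nhdsSet x hx
  have hKη : K ⊆ tsupport η := fun x hx => subset_tsupport η (by simp [hη_one_on x hx])
  obtain ⟨C, hC_pos, hC⟩ := exists_integral_mul_gradNormSq_le (μ := μ) (F := F) b hη hη_supp
  refine ⟨C, hC_pos, tsupport η, hη_supp, hKη, hηΩ, fun a ha => ?_⟩
  have hint : Integrable (fun x => η x * gradNormSq b a x) μ :=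
    integrable_bilinear_of_hasCompactSupport_left (ContinuousLinearMap.mul ℝ ℝ) hη.continuous
      (continuous_gradNormSq b (ha.of_le one_le_two)) hη_supp
  calc ∫ x in K, gradNormSq b a x ∂μ = ∫ x in K, η x * gradNormSq b a x ∂μ :=
        setIntegral_congr_fun hK.measurableSet fun x hx => by simp [hη_one_on x hx]
    _ ≤ ∫ x, η x * gradNormSq b a x ∂μ := setIntegral_le_integral hint
        (.of_forall fun x => mul_nonneg (hη_nonneg x) (gradNormSq_nonneg b a x))
    _ ≤ _ := hC a ha

lemma exists_integral_norm_laplacian_smul_sq_le {χ : E → ℝ} (hχ : ContDiff ℝ 2 χ)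
    (hχ_supp : HasCompactSupport χ) :
    ∃ C > 0, ∀ a : E → F, ContDiff ℝ 2 a → ∫ x, ‖Δ (χ • a) x‖ ^ 2 ∂μ
      ≤ C * ∫ x in tsupport χ, (gradNormSq b a x + (‖a x‖ ^ 2 + ‖Δ a x‖ ^ 2)) ∂μ := by
  have hcont_χ := hχ.continuous
  have hcont_Δχ := continuous_laplacian hχ
  have hcont_gradχ := continuous_gradNormSq b (hχ.of_le one_le_two)
  obtain ⟨M, hM_pos, hM⟩ := exists_forall_le_of_isCompact (K := tsupport χ) hχ_supp
    (φ := fun x => 3 * (χ x ^ 2 + 4 * gradNormSq b χ x + Δ χ x ^ 2)) (by fun_prop)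
  refine ⟨M, hM_pos, fun a ha => ?_⟩
  have hcont_a := ha.continuous
  have hcont_Δa := continuous_laplacian ha
  have hcont_grad := continuous_gradNormSq b (ha.of_le one_le_two)
  have hcont_Δχa := continuous_laplacian (hχ.smul ha)
  have hvanish : ∀ x ∉ tsupport χ, ‖Δ (χ • a) x‖ ^ 2 = 0 := fun x hx => by
    have hnot : x ∉ Function.support (Δ (χ • a)) := fun h =>
      hx (tsupport_smul_subset_left χ a (support_laplacian_subset _ h))
    simpa using hnot
  rw [← setIntegral_eq_integral_of_forall_compl_eq_zero hvanish, ← integral_const_mul]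
  refine setIntegral_mono_on ?_ ?_ hχ_supp.measurableSet fun x hx =>
    (norm_laplacian_smul_sq_le b hχ ha x).trans ?_
  · exact ContinuousOn.integrableOn_compact hχ_supp (by fun_prop)
  · exact ContinuousOn.integrableOn_compact hχ_supp (by fun_prop)
  · have hgrad := gradNormSq_nonneg b a x
    gcongr
    exact hM x hx

lemma exists_integral_norm_laplacian_cutoff_sq_le {χ : E → ℝ} (hχ : ContDiff ℝ 2 χ)
    (hχ_supp : HasCompactSupport χ) {Ω : Set E} (hΩ : IsOpen Ω) (hχΩ : tsupport χ ⊆ Ω) :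
    ∃ C > 0, ∃ L : Set E, IsCompact L ∧ tsupport χ ⊆ L ∧ L ⊆ Ω ∧ ∀ a : E → F, ContDiff ℝ 2 a →
      ∫ x, ‖Δ (χ • a) x‖ ^ 2 ∂μ ≤ C * ∫ x in L, (‖a x‖ ^ 2 + ‖Δ a x‖ ^ 2) ∂μ := by
  obtain ⟨C₁, hC₁_pos, hC₁⟩ := exists_integral_norm_laplacian_smul_sq_le (μ := μ) (F := F)
    (stdOrthonormalBasis ℝ E) hχ hχ_supp
  obtain ⟨C₂, hC₂_pos, L, hL, hχL, hLΩ, hC₂⟩ := exists_setIntegral_gradNormSq_le (μ := μ) (F := F)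
    (stdOrthonormalBasis ℝ E) hχ_supp hΩ hχΩ
  refine ⟨C₁ * (C₂ + 1), by positivity, L, hL, hχL, hLΩ, fun a ha => ?_⟩
  have hcont : Continuous fun x => ‖a x‖ ^ 2 + ‖Δ a x‖ ^ 2 :=
    (ha.continuous.norm.pow 2).add ((continuous_laplacian ha).norm.pow 2)
  have hcont_grad := continuous_gradNormSq (stdOrthonormalBasis ℝ E) (ha.of_le one_le_two)
  have hmono : ∫ x in tsupport χ, (‖a x‖ ^ 2 + ‖Δ a x‖ ^ 2) ∂μ
      ≤ ∫ x in L, (‖a x‖ ^ 2 + ‖Δ a x‖ ^ 2) ∂μ :=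
    setIntegral_mono_set (hcont.continuousOn.integrableOn_compact hL)
      (.of_forall fun x => by positivity) hχL.eventuallyLE
  refine (hC₁ a ha).trans ?_
  rw [integral_add (hcont_grad.continuousOn.integrableOn_compact hχ_supp)
    (hcont.continuousOn.integrableOn_compact hχ_supp), mul_assoc, add_one_mul]
  gcongr
  exact hC₂ a ha

end InteriorEstimate

section Sobolev

lemma eLpNorm_restrict_le_eLpNorm_mul_measure_rpow {X F : Type*} [MeasurableSpace X]
    {μ : Measure X} [NormedAddCommGroup F] {f : X → F} {p q : ℝ≥0∞} (hpq : p ≤ q)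
    (hf : AEStronglyMeasurable f μ) (s : Set X) :
    eLpNorm f p (μ.restrict s) ≤ eLpNorm f q μ * μ s ^ (1 / p.toReal - 1 / q.toReal) := by
  refine (eLpNorm_le_eLpNorm_mul_rpow_measure_univ hpq hf.restrict).trans ?_
  rw [Measure.restrict_apply_univ]
  gcongr
  exact Measure.restrict_le_self

lemma integral_norm_sq_eq_toReal_eLpNorm_sq {X F : Type*} [MeasurableSpace X] {μ : Measure X}
    [NormedAddCommGroup F] {f : X → F} (hf : AEStronglyMeasurable f μ) :
    ∫ x, ‖f x‖ ^ 2 ∂μ = (eLpNorm f 2 μ).toReal ^ 2 := by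
  have hnonneg : 0 ≤ ∫ x, ‖f x‖ ^ 2 ∂μ := integral_nonneg fun x => sq_nonneg _
  rw [toReal_eLpNorm hf, lpNorm_eq_integral_norm_rpow_toReal two_ne_zero ENNReal.ofNat_ne_top hf,
    ENNReal.toReal_ofNat]
  simpa using (Real.rpow_inv_natCast_pow hnonneg two_ne_zero).symm

variable {E F : Type*} [NormedAddCommGroup E] [NormedSpace ℝ E] [FiniteDimensional ℝ E]
  [Nontrivial E] [MeasurableSpace E] [BorelSpace E] {μ : Measure E} [μ.IsAddHaarMeasure]
  [NormedAddCommGroup F] [InnerProductSpace ℝ F] {p q : ℝ≥0}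

lemma eLpNorm_two_restrict_le_eLpNorm_two_fderiv (hp : 1 ≤ p) (hp2 : p ≤ 2) (hq : 2 ≤ q)
    (hpq : (q : ℝ)⁻¹ = (p : ℝ)⁻¹ - (finrank ℝ E : ℝ)⁻¹) {v : E → F} (hv : ContDiff ℝ 1 v)
    (hv_supp : HasCompactSupport v) {S : Set E} (hvS : tsupport v ⊆ S) (A : Set E) :
    eLpNorm v 2 (μ.restrict A) ≤ eLpNormLESNormFDerivOfEqInnerConst μ p
      * (eLpNorm (fderiv ℝ v) 2 μ * μ S ^ (1 / (p : ℝ) - 1 / 2))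
      * μ A ^ (1 / 2 - 1 / (q : ℝ)) := by
  have hfderiv_cont : Continuous (fderiv ℝ v) := hv.continuous_fderiv one_ne_zero
  have hfderiv_supp : Function.support (fderiv ℝ v) ⊆ S := (support_fderiv_subset ℝ).trans hvS
  have hrestrict := eLpNorm_restrict_eq_of_support_subset (f := fderiv ℝ v) (p := p)
    (μ := μ) hfderiv_supp
  calc eLpNorm v 2 (μ.restrict A)
      ≤ eLpNorm v q μ * μ A ^ (1 / 2 - 1 / (q : ℝ)) := by
        simpa using eLpNorm_restrict_le_eLpNorm_mul_measure_rpow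
          (p := 2) (q := q) (by exact_mod_cast hq) hv.continuous.aestronglyMeasurable A
    _ ≤ eLpNormLESNormFDerivOfEqInnerConst μ p * eLpNorm (fderiv ℝ v) p μ
          * μ A ^ (1 / 2 - 1 / (q : ℝ)) := by
        gcongr
        exact eLpNorm_le_eLpNorm_fderiv_of_eq_inner μ hv hv_supp hp finrank_pos hpq
    _ ≤ _ := by
        gcongr
        rw [← hrestrict]
        simpa using eLpNorm_restrict_le_eLpNorm_mul_measure_rpow
          (p := p) (q := 2) (by exact_mod_cast hp2) hfderiv_cont.aestronglyMeasurable S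

lemma exists_setIntegral_norm_sq_le_integral_norm_fderiv_sq (hp : 1 ≤ p) (hp2 : p ≤ 2)
    (hq : 2 ≤ q) (hpq : (q : ℝ)⁻¹ = (p : ℝ)⁻¹ - (finrank ℝ E : ℝ)⁻¹) {S : Set E}
    (hS : IsCompact S) :
    ∃ C > 0, ∀ v : E → F, ContDiff ℝ 1 v → tsupport v ⊆ S → ∀ A : Set E, μ A ≠ ∞ →
      ∫ x in A, ‖v x‖ ^ 2 ∂μ ≤ C * μ.real A ^ (1 - 2 / (q : ℝ)) * ∫ x, ‖fderiv ℝ v x‖ ^ 2 ∂μ := by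
  set G : ℝ≥0 := eLpNormLESNormFDerivOfEqInnerConst μ p
  set C₀ : ℝ := G * μ.real S ^ (1 / (p : ℝ) - 1 / 2)
  refine ⟨C₀ ^ 2 + 1, by positivity, fun v hv hvS A hA => ?_⟩
  have hv_supp : HasCompactSupport v := hS.of_isClosed_subset (isClosed_tsupport v) hvS
  have hfderiv_cont : Continuous (fderiv ℝ v) := hv.continuous_fderiv one_ne_zero
  have hfderiv_ne_top : eLpNorm (fderiv ℝ v) 2 μ ≠ ∞ :=
    (hfderiv_cont.memLp_of_hasCompactSupport (hv_supp.fderiv ℝ)).eLpNorm_ne_top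
  have hp_exp : 0 ≤ 1 / (p : ℝ) - 1 / 2 :=
    sub_nonneg.2 (one_div_le_one_div_of_le (by positivity) (by exact_mod_cast hp2))
  have hq_exp : 0 ≤ 1 / 2 - 1 / (q : ℝ) :=
    sub_nonneg.2 (one_div_le_one_div_of_le two_pos (by exact_mod_cast hq))
  have hnorm : (eLpNorm v 2 (μ.restrict A)).toReal
      ≤ C₀ * μ.real A ^ (1 / 2 - 1 / (q : ℝ)) * (eLpNorm (fderiv ℝ v) 2 μ).toReal := by
    have hμS := ENNReal.rpow_ne_top_of_nonneg hp_exp (hS.measure_ne_top (μ := μ))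
    have hμA := ENNReal.rpow_ne_top_of_nonneg hq_exp hA
    refine (ENNReal.toReal_mono (by finiteness)
      (eLpNorm_two_restrict_le_eLpNorm_two_fderiv hp hp2 hq hpq hv hv_supp hvS A)).trans_eq ?_
    simp only [ENNReal.toReal_mul, ← ENNReal.toReal_rpow, ENNReal.coe_toReal, C₀, measureReal_def]
    ring
  have hpow : (μ.real A ^ (1 / 2 - 1 / (q : ℝ))) ^ 2 = μ.real A ^ (1 - 2 / (q : ℝ)) := by
    rw [← Real.rpow_mul_natCast measureReal_nonneg]
    congr 1
    push_cast
    ring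
  rw [integral_norm_sq_eq_toReal_eLpNorm_sq hv.continuous.aestronglyMeasurable,
    integral_norm_sq_eq_toReal_eLpNorm_sq hfderiv_cont.aestronglyMeasurable]
  calc _ ≤ (C₀ * μ.real A ^ (1 / 2 - 1 / (q : ℝ)) * (eLpNorm (fderiv ℝ v) 2 μ).toReal) ^ 2 := by
        gcongr
    _ = C₀ ^ 2 * μ.real A ^ (1 - 2 / (q : ℝ)) * (eLpNorm (fderiv ℝ v) 2 μ).toReal ^ 2 := by
        rw [mul_pow, mul_pow, hpow]
    _ ≤ _ := by
        gcongr
        exact le_add_of_nonneg_right zero_le_one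

end Sobolev

section SmallSets

variable {E F ι : Type*} [NormedAddCommGroup E] [InnerProductSpace ℝ E]
  [FiniteDimensional ℝ E] [Nontrivial E] [MeasurableSpace E] [BorelSpace E] {μ : Measure E}
  [μ.IsAddHaarMeasure] [Fintype ι] [NormedAddCommGroup F] [InnerProductSpace ℝ F]
  (b : OrthonormalBasis ι ℝ E) {p q : ℝ≥0}

lemma exists_setIntegral_gradNormSq_le_integral_norm_laplacian_sq (hp : 1 ≤ p) (hp2 : p ≤ 2)
    (hq : 2 ≤ q) (hpq : (q : ℝ)⁻¹ = (p : ℝ)⁻¹ - (finrank ℝ E : ℝ)⁻¹) {S : Set E}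
    (hS : IsCompact S) :
    ∃ C > 0, ∀ u : E → F, ContDiff ℝ 2 u → tsupport u ⊆ S → ∀ A : Set E, μ A ≠ ∞ →
      ∫ x in A, gradNormSq b u x ∂μ
        ≤ C * μ.real A ^ (1 - 2 / (q : ℝ)) * ∫ x, ‖Δ u x‖ ^ 2 ∂μ := by
  obtain ⟨C, hC_pos, hC⟩ := exists_setIntegral_norm_sq_le_integral_norm_fderiv_sq (μ := μ)
    (F := F) hp hp2 hq hpq hS
  refine ⟨C, hC_pos, fun u hu huS A hA => ?_⟩
  have hu_supp : HasCompactSupport u := hS.of_isClosed_subset (isClosed_tsupport u) huS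
  have hu' i : ContDiff ℝ 1 (dirDeriv (b i) u) := contDiff_dirDeriv hu (by norm_num) _
  have hu_supp' i := hasCompactSupport_dirDeriv hu_supp (b i)
  have huS' i : tsupport (dirDeriv (b i) u) ⊆ S := (tsupport_fderiv_apply_subset ℝ _).trans huS
  have hint i : Integrable (fun x => ‖dirDeriv (b i) u x‖ ^ 2) μ :=
    ((hu' i).continuous.memLp_of_hasCompactSupport (hu_supp' i)).integrable_norm_pow two_ne_zero
  have hfderiv i : ∫ x, ‖fderiv ℝ (dirDeriv (b i) u) x‖ ^ 2 ∂μ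
      ≤ ∫ x, gradNormSq b (dirDeriv (b i) u) x ∂μ :=
    integral_mono
      ((((hu' i).continuous_fderiv one_ne_zero).memLp_of_hasCompactSupport
        ((hu_supp' i).fderiv ℝ)).integrable_norm_pow two_ne_zero)
      ((continuous_gradNormSq b (hu' i)).integrable_of_hasCompactSupport
        (hasCompactSupport_gradNormSq b (hu_supp' i)))
      (norm_fderiv_sq_le_gradNormSq b _)
  calc ∫ x in A, gradNormSq b u x ∂μ = ∑ i, ∫ x in A, ‖dirDeriv (b i) u x‖ ^ 2 ∂μ :=
        integral_finsetSum _ fun i _ => (hint i).integrableOn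
    _ ≤ ∑ i, C * μ.real A ^ (1 - 2 / (q : ℝ)) * ∫ x, gradNormSq b (dirDeriv (b i) u) x ∂μ := by
        gcongr with i
        exact (hC _ (hu' i) (huS' i) A hA).trans
          (mul_le_mul_of_nonneg_left (hfderiv i) (by positivity))
    _ = C * μ.real A ^ (1 - 2 / (q : ℝ)) * ∫ x, ‖Δ u x‖ ^ 2 ∂μ := by
        rw [integral_norm_laplacian_sq b hu hu_supp, Finset.mul_sum]

lemma exists_setIntegral_gradNormSq_le_of_subset (hp : 1 ≤ p) (hp2 : p ≤ 2)
    (hq : 2 ≤ q) (hpq : (q : ℝ)⁻¹ = (p : ℝ)⁻¹ - (finrank ℝ E : ℝ)⁻¹) {K Ω : Set E}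
    (hK : IsCompact K) (hΩ : IsOpen Ω) (hKΩ : K ⊆ Ω) :
    ∃ C > 0, ∃ L : Set E, IsCompact L ∧ K ⊆ L ∧ L ⊆ Ω ∧ ∀ a : E → F, ContDiff ℝ 2 a →
      ∀ A ⊆ K, MeasurableSet A → ∫ x in A, gradNormSq b a x ∂μ
        ≤ C * μ.real A ^ (1 - 2 / (q : ℝ)) * ∫ x in L, (‖a x‖ ^ 2 + ‖Δ a x‖ ^ 2) ∂μ := by
  obtain ⟨χ, hχ, hχ_supp, hχΩ, hχ_one, -⟩ := exists_contDiff_tsupport_subset_eq_one hK hΩ hKΩ 2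
  obtain ⟨C₁, hC₁_pos, hC₁⟩ := exists_setIntegral_gradNormSq_le_integral_norm_laplacian_sq
    (μ := μ) (F := F) b hp hp2 hq hpq hχ_supp.isCompact
  obtain ⟨C₂, hC₂_pos, L, hL, hχL, hLΩ, hC₂⟩ := exists_integral_norm_laplacian_cutoff_sq_le
    (μ := μ) (F := F) hχ hχ_supp hΩ hχΩ
  have hKχ : K ⊆ tsupport χ := fun x hx =>
    subset_tsupport χ (by simp [hχ_one.self_of_nhdsSet x hx])
  refine ⟨C₁ * C₂, by positivity, L, hL, hKχ.trans hχL, hLΩ, fun a ha A hAK hA => ?_⟩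
  have hlocal : ∀ x ∈ A, gradNormSq b a x = gradNormSq b (χ • a) x := fun x hx => by
    refine gradNormSq_eq_of_eventuallyEq b ?_
    filter_upwards [eventually_nhdsSet_iff_forall.1 hχ_one x (hAK hx)] with y hy
    simp [hy]
  calc ∫ x in A, gradNormSq b a x ∂μ = ∫ x in A, gradNormSq b (χ • a) x ∂μ :=
        setIntegral_congr_fun hA hlocal
    _ ≤ C₁ * μ.real A ^ (1 - 2 / (q : ℝ)) * ∫ x, ‖Δ (χ • a) x‖ ^ 2 ∂μ :=
        hC₁ _ (hχ.smul ha) (tsupport_smul_subset_left χ a) A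
          (measure_ne_top_of_subset hAK hK.measure_ne_top)
    _ ≤ C₁ * μ.real A ^ (1 - 2 / (q : ℝ))
          * (C₂ * ∫ x in L, (‖a x‖ ^ 2 + ‖Δ a x‖ ^ 2) ∂μ) := by
        gcongr
        exact hC₂ a ha
    _ = _ := by ring

end SmallSets

section GraphNorm

lemma integral_norm_sq_add_norm_sq_le_of_integral_inner_nonpos {X F : Type*} [MeasurableSpace X]
    {μ : Measure X} [NormedAddCommGroup F] [InnerProductSpace ℝ F] {f h : X → F}
    (hf : MemLp f 2 μ) (hh : MemLp h 2 μ) (hfh : ∫ x, ⟪f x, h x⟫_ℝ ∂μ ≤ 0) :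
    ∫ x, (‖h x‖ ^ 2 + ‖f x‖ ^ 2) ∂μ ≤ ∫ x, ‖-f x + h x‖ ^ 2 ∂μ := by
  have hint_inner : Integrable (fun x => ⟪f x, h x⟫_ℝ) μ :=
    (hf.norm.integrable_mul hh.norm).mono' (hf.1.inner hh.1)
      (.of_forall fun x => norm_inner_le_norm _ _)
  have hexpand x : ‖-f x + h x‖ ^ 2 = ‖h x‖ ^ 2 + ‖f x‖ ^ 2 - 2 * ⟪f x, h x⟫_ℝ := by
    rw [neg_add_eq_sub, norm_sub_sq_real, real_inner_comm]
    ring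
  have hint_sq : Integrable (fun x => ‖h x‖ ^ 2 + ‖f x‖ ^ 2) μ :=
    (hh.integrable_norm_pow two_ne_zero).add (hf.integrable_norm_pow two_ne_zero)
  simp only [hexpand]
  rw [integral_sub hint_sq (hint_inner.const_mul 2), integral_const_mul]
  linarith

lemma memLp_two_of_continuousOn {X F : Type*} [TopologicalSpace X] [MeasurableSpace X]
    [OpensMeasurableSpace X] {μ : Measure X} [NormedAddCommGroup F]
    [SecondCountableTopologyEither X F] {f : X → F} {U : Set X} (hf : ContinuousOn f U)
    (hU : IsOpen U) (hf_int : IntegrableOn (fun x => ‖f x‖ ^ 2) U μ) : MemLp f 2 (μ.restrict U) :=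
  (memLp_two_iff_integrable_sq_norm (hf.aestronglyMeasurable hU.measurableSet)).2 hf_int

lemma measureReal_ball_rpow {E : Type*} [NormedAddCommGroup E] [NormedSpace ℝ E]
    [FiniteDimensional ℝ E] [MeasurableSpace E] [BorelSpace E] (μ : Measure E)
    [μ.IsAddHaarMeasure] (c : E) {ε : ℝ} (hε : 0 < ε) (s : ℝ) :
    μ.real (Metric.ball c ε) ^ s = ε ^ (finrank ℝ E * s) * μ.real (Metric.ball (0 : E) 1) ^ s := by
  rw [measureReal_def, Measure.addHaar_ball_of_pos μ c hε, ENNReal.toReal_mul,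
    ENNReal.toReal_ofReal (by positivity), Real.mul_rpow (by positivity) (by positivity),
    Real.rpow_natCast_mul hε.le, measureReal_def]

variable {E F ι : Type*} [NormedAddCommGroup E] [InnerProductSpace ℝ E]
  [FiniteDimensional ℝ E] [Nontrivial E] [MeasurableSpace E] [BorelSpace E] {μ : Measure E}
  [μ.IsAddHaarMeasure] [Fintype ι] [NormedAddCommGroup F] [InnerProductSpace ℝ F]
  (b : OrthonormalBasis ι ℝ E) {p q : ℝ≥0}

lemma exists_setIntegral_gradNormSq_le_integral_norm_neg_laplacian_add_sq (hp : 1 ≤ p)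
    (hp2 : p ≤ 2) (hq : 2 ≤ q) (hpq : (q : ℝ)⁻¹ = (p : ℝ)⁻¹ - (finrank ℝ E : ℝ)⁻¹)
    {K Ω : Set E} (hK : IsCompact K) (hΩ : IsOpen Ω) (hKΩ : K ⊆ Ω) :
    ∃ C > 0, ∀ g : E → F, ContDiffOn ℝ 2 g Ω → IntegrableOn (fun x => ‖g x‖ ^ 2) Ω μ →
      IntegrableOn (fun x => ‖Δ g x‖ ^ 2) Ω μ → ∫ x in Ω, ⟪Δ g x, g x⟫_ℝ ∂μ ≤ 0 →
      ∀ A ⊆ K, MeasurableSet A → ∫ x in A, gradNormSq b g x ∂μ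
        ≤ C * μ.real A ^ (1 - 2 / (q : ℝ)) * ∫ x in Ω, ‖-Δ g x + g x‖ ^ 2 ∂μ := by
  obtain ⟨C, hC_pos, L, hL, hKL, hLΩ, hC⟩ := exists_setIntegral_gradNormSq_le_of_subset
    (μ := μ) (F := F) b hp hp2 hq hpq hK hΩ hKΩ
  refine ⟨C, hC_pos, fun g hg hg_int hΔg_int hsign A hAK hA => ?_⟩
  obtain ⟨f, hf, hfg⟩ := exists_contDiff_eventuallyEq_of_contDiffOn hL hΩ hLΩ (n := 2) hg
  have hg_memLp := memLp_two_of_continuousOn hg.continuousOn hΩ hg_int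
  have hΔg_memLp := memLp_two_of_continuousOn (continuousOn_laplacian hg hΩ) hΩ hΔg_int
  have hfg_L : ∀ x ∈ L, ‖f x‖ ^ 2 + ‖Δ f x‖ ^ 2 = ‖g x‖ ^ 2 + ‖Δ g x‖ ^ 2 := fun x hx => by
    rw [(hfg x hx).eq_of_nhds, (laplacian_congr_nhds (hfg x hx)).eq_of_nhds]
  calc ∫ x in A, gradNormSq b g x ∂μ = ∫ x in A, gradNormSq b f x ∂μ :=
        setIntegral_congr_fun hA fun x hx =>
          gradNormSq_eq_of_eventuallyEq b (hfg x (hKL (hAK hx))).symm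
    _ ≤ C * μ.real A ^ (1 - 2 / (q : ℝ)) * ∫ x in L, (‖f x‖ ^ 2 + ‖Δ f x‖ ^ 2) ∂μ :=
        hC f hf A hAK hA
    _ = C * μ.real A ^ (1 - 2 / (q : ℝ)) * ∫ x in L, (‖g x‖ ^ 2 + ‖Δ g x‖ ^ 2) ∂μ := by
        rw [setIntegral_congr_fun hL.measurableSet hfg_L]
    _ ≤ C * μ.real A ^ (1 - 2 / (q : ℝ)) * ∫ x in Ω, (‖g x‖ ^ 2 + ‖Δ g x‖ ^ 2) ∂μ :=
        mul_le_mul_of_nonneg_left (setIntegral_mono_set (hg_int.add hΔg_int)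
          (.of_forall fun x => by positivity) hLΩ.eventuallyLE) (by positivity)
    _ ≤ _ := mul_le_mul_of_nonneg_left (integral_norm_sq_add_norm_sq_le_of_integral_inner_nonpos
          hΔg_memLp hg_memLp hsign) (by positivity)

theorem dirichlet_energy_small_ball_general (hp : 1 ≤ p) (hp2 : p ≤ 2) (hq : 2 ≤ q)
    (hpq : (q : ℝ)⁻¹ = (p : ℝ)⁻¹ - (finrank ℝ E : ℝ)⁻¹)
    {K Ω : Set E} (hK : IsCompact K) (hΩ : IsOpen Ω) (hKΩ : K ⊆ Ω) :
    ∃ C > 0, ∀ c : E, ∀ ε : ℝ, 0 < ε → Metric.ball c ε ⊆ K →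
      ∀ g : E → F, ContDiffOn ℝ 2 g Ω → IntegrableOn (fun x => ‖g x‖ ^ 2) Ω μ →
      IntegrableOn (fun x => ‖Δ g x‖ ^ 2) Ω μ → ∫ x in Ω, ⟪Δ g x, g x⟫_ℝ ∂μ ≤ 0 →
      ∫ x in Metric.ball c ε, gradNormSq b g x ∂μ
        ≤ C * ε ^ (finrank ℝ E * (1 - 2 / (q : ℝ))) * ∫ x in Ω, ‖-Δ g x + g x‖ ^ 2 ∂μ := by
  obtain ⟨C, hC_pos, hC⟩ := exists_setIntegral_gradNormSq_le_integral_norm_neg_laplacian_add_sq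
    (μ := μ) (F := F) b hp hp2 hq hpq hK hΩ hKΩ
  have hball_pos : 0 < μ.real (Metric.ball (0 : E) 1) :=
    ENNReal.toReal_pos (Metric.measure_ball_pos μ 0 one_pos).ne' measure_ball_lt_top.ne
  refine ⟨C * μ.real (Metric.ball (0 : E) 1) ^ (1 - 2 / (q : ℝ)), by positivity,
    fun c ε hε hball g hg hg_int hΔg_int hsign => ?_⟩
  have hestimate := hC g hg hg_int hΔg_int hsign _ hball measurableSet_ball
  rwa [measureReal_ball_rpow μ c hε, mul_comm (ε ^ _), ← mul_assoc] at hestimate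

end GraphNorm

section Plane

lemma gradSq_eq_gradNormSq (g : E2 → ℂ) :
    gradSq g = gradNormSq (EuclideanSpace.basisFun (Fin 2) ℝ) g := by
  ext x
  simp [gradSq, pd, gradNormSq, dirDeriv]

lemma eqOn_lap_laplacian {g : E2 → ℂ} {Ω : Set E2} (hg : ContDiffOn ℝ 2 g Ω) (hΩ : IsOpen Ω) :
    EqOn (lap g) (Δ g) Ω := by
  intro x hx
  have hg := hg.contDiffAt (hΩ.mem_nhds hx)
  simp only [laplacian_eq_sum_dirDeriv (EuclideanSpace.basisFun (Fin 2) ℝ) hg,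
    Fin.sum_univ_two, EuclideanSpace.basisFun_apply]
  rfl

lemma re_integral_mul_conj {X : Type*} [MeasurableSpace X] {μ : Measure X} {f h : X → ℂ}
    (hf : MemLp f 2 μ) (hh : MemLp h 2 μ) :
    (∫ x, f x * (starRingEnd ℂ) (h x) ∂μ).re = ∫ x, ⟪f x, h x⟫_ℝ ∂μ := by
  have hint : Integrable (fun x => f x * (starRingEnd ℂ) (h x)) μ := hf.integrable_mul hh.star
  refine (integral_re hint).symm.trans (integral_congr_ae (.of_forall fun x => ?_))
  change (f x * (starRingEnd ℂ) (h x)).re = ⟪f x, h x⟫_ℝ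
  rw [real_inner_comm, Complex.inner, mul_comm]

lemma re_setIntegral_lap_mul_conj {g : E2 → ℂ} {Ω : Set E2} (hΩ : IsOpen Ω)
    (hg : ContDiffOn ℝ 2 g Ω) (hg_int : IntegrableOn (fun p => ‖g p‖ ^ 2) Ω)
    (hΔg_int : IntegrableOn (fun p => ‖Δ g p‖ ^ 2) Ω) :
    (∫ p in Ω, lap g p * (starRingEnd ℂ) (g p)).re = ∫ p in Ω, ⟪Δ g p, g p⟫_ℝ := by
  have hcongr : EqOn (fun p => lap g p * (starRingEnd ℂ) (g p))
      (fun p => Δ g p * (starRingEnd ℂ) (g p)) Ω :=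
    fun p hp => by simp only [eqOn_lap_laplacian hg hΩ hp]
  rw [setIntegral_congr_fun hΩ.measurableSet hcongr]
  exact re_integral_mul_conj
    (memLp_two_of_continuousOn (continuousOn_laplacian hg hΩ) hΩ hΔg_int)
    (memLp_two_of_continuousOn hg.continuousOn hΩ hg_int)

lemma ball_subset_closedBall_two_mul_rpow {X : Type*} [PseudoMetricSpace X] (c : X) {ϵ s : ℝ}
    (hϵ : 0 ≤ ϵ) (hϵ1 : ϵ ≤ 1) (hs : s ≤ 1) :
    Metric.ball c ϵ ⊆ Metric.closedBall c (2 * ϵ ^ s) := by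
  have hle : ϵ ≤ ϵ ^ s := Real.self_le_rpow_of_le_one hϵ hϵ1 hs
  exact Metric.ball_subset_closedBall.trans (Metric.closedBall_subset_closedBall (by linarith))

end Plane

/-- Lemma 4.3 of the paper. For a bounded open `Ω ⊆ ℝ²` and an open
`Ω₀` compactly contained in `Ω`, there is `C > 0` such that for every `ϵ ∈ (0,1)` with
`B̄_{2ϵ^{1/3}} ⊆ Ω₀` and every `g` twice continuously differentiable on `Ω` with `g`,
`|∇g|`, `Δg` square-integrable on `Ω` and `Re ∫_Ω (Δg)·conj(g) ≤ 0`, one has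
`∫_{B_ϵ} |∇g|² ≤ C ϵ^{4/3} ∫_Ω |−Δg + g|²`. -/
theorem dirichlet_energy_small_ball (Ω Ω₀ : Set E2) (hΩo : IsOpen Ω)
    (hΩb : Bornology.IsBounded Ω) (hΩ₀o : IsOpen Ω₀) (hcl : closure Ω₀ ⊆ Ω) :
    ∃ C > 0, ∀ ϵ : ℝ, 0 < ϵ → ϵ < 1 →
      Metric.closedBall (0 : E2) (2 * ϵ ^ ((1:ℝ)/3)) ⊆ Ω₀ →
      ∀ g : E2 → ℂ, ContDiffOn ℝ 2 g Ω →
      IntegrableOn (fun p => ‖g p‖ ^ 2) Ω →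
      IntegrableOn (fun p => gradSq g p) Ω →
      IntegrableOn (fun p => ‖lap g p‖ ^ 2) Ω →
      (∫ p in Ω, lap g p * (starRingEnd ℂ) (g p)).re ≤ 0 →
      ∫ p in Metric.ball (0 : E2) ϵ, gradSq g p
        ≤ C * ϵ ^ ((4:ℝ)/3) * ∫ p in Ω, ‖-lap g p + g p‖ ^ 2 := by
  have hK : IsCompact (closure Ω₀) :=
    Metric.isCompact_of_isClosed_isBounded isClosed_closure (hΩb.subset hcl)
  obtain ⟨C, hC_pos, hC⟩ := dirichlet_energy_small_ball_general (μ := volume) (F := ℂ)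
    (EuclideanSpace.basisFun (Fin 2) ℝ) (p := 3 / 2) (q := 6)
    (by rw [← NNReal.coe_le_coe]; norm_num) (by rw [← NNReal.coe_le_coe]; norm_num)
    (by norm_num) (by simp only [finrank_euclideanSpace, Fintype.card_fin]; norm_num) hK hΩo hcl
  refine ⟨C, hC_pos, fun ϵ hϵ hϵ1 hball g hg hg_int _ hlap_int hsign => ?_⟩
  have hlap := eqOn_lap_laplacian hg hΩo
  have hΔg_int : IntegrableOn (fun p => ‖Δ g p‖ ^ 2) Ω :=
    hlap_int.congr_fun (fun p hp => by simp only [hlap hp]) hΩo.measurableSet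
  have hgraph : EqOn (fun p => ‖-lap g p + g p‖ ^ 2) (fun p => ‖-Δ g p + g p‖ ^ 2) Ω :=
    fun p hp => by simp only [hlap hp]
  have hϵ_ball : Metric.ball 0 ϵ ⊆ closure Ω₀ :=
    (ball_subset_closedBall_two_mul_rpow 0 hϵ.le hϵ1.le (by norm_num)).trans
      (hball.trans subset_closure)
  have hexp : (finrank ℝ E2 * (1 - 2 / ((6 : ℝ≥0) : ℝ)) : ℝ) = 4 / 3 := by
    simp only [finrank_euclideanSpace, Fintype.card_fin]
    norm_num
  rw [re_setIntegral_lap_mul_conj hΩo hg hg_int hΔg_int] at hsign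
  rw [gradSq_eq_gradNormSq, ← hexp, setIntegral_congr_fun hΩo.measurableSet hgraph]
  exact hC 0 ϵ hϵ hϵ_ball g hg hg_int hΔg_int hsign
end
end

section
/- Let ε > 0 and let g be a continuously differentiable complex-valued function on the open annulus A = B_{2ε} ∖ B̄_ε with ∫_A (|∇g|² + |g|²) dx dy < ∞. Then there exists τ ∈ (ε, 2ε) such that ∫₀^{2π} |∂g̃/∂φ (τ, φ)|² dφ ≤ 4 ∫_A (|∇g|² + |g|²) dx dy, where g̃(r,φ) := g(r cos φ, r sin φ). -/
open MeasureTheory Real Set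

noncomputable section

/-!
The curve `φ ↦ circ τ φ` has speed `τ`, so `|∂g̃/∂φ (τ, φ)| ≤ τ ‖Dg‖`, where the operator norm
satisfies `‖Dg‖² ≤ |∇g|²`. For the annulus `A` of radii `a < b`, polar coordinates express
`∫_A ‖Dg‖²` as the integral over `r ∈ (a, b)` of `r ∫ ‖Dg (circ r φ)‖² dφ`, so at some radius `τ`
this quantity is at most its average `(b - a)⁻¹ ∫_A ‖Dg‖²`. Multiplying by `τ < b` gives the bound
with constant `b / (b - a)`, which is `2` for the radii `ε` and `2ε`.
-/

theorem opNorm_sq_le_sum_norm_apply_sq {ι 𝕜 E F : Type*} [Fintype ι] [RCLike 𝕜]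
    [NormedAddCommGroup E] [InnerProductSpace 𝕜 E] [SeminormedAddCommGroup F] [NormedSpace 𝕜 F]
    (e : OrthonormalBasis ι 𝕜 E) (L : E →L[𝕜] F) :
    ‖L‖ ^ 2 ≤ ∑ i, ‖L (e i)‖ ^ 2 := by
  refine (Real.le_sqrt (norm_nonneg L) (by positivity)).1 <|
    L.opNorm_le_bound (Real.sqrt_nonneg _) fun x => ?_
  calc ‖L x‖ = ‖∑ i, e.repr x i • L (e i)‖ := by
        conv_lhs => rw [← e.sum_repr x, map_sum]
        simp only [map_smul]
    _ ≤ ∑ i, ‖L (e i)‖ * ‖e.repr x i‖ :=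
        norm_sum_le_of_le _ fun i _ => ((norm_smul _ _).trans (mul_comm _ _)).le
    _ ≤ √(∑ i, ‖L (e i)‖ ^ 2) * √(∑ i, ‖e.repr x i‖ ^ 2) :=
        Real.sum_mul_le_sqrt_mul_sqrt _ _ _
    _ = √(∑ i, ‖L (e i)‖ ^ 2) * ‖x‖ := by
        rw [← EuclideanSpace.norm_eq, e.repr.norm_map]

theorem norm_fderiv_sq_le_gradSq (f : E2 → ℂ) (p : E2) : ‖fderiv ℝ f p‖ ^ 2 ≤ gradSq f p := by
  simpa [gradSq, pd] using
    opNorm_sq_le_sum_norm_apply_sq (EuclideanSpace.basisFun (Fin 2) ℝ) (fderiv ℝ f p)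

theorem integral_norm_pow_eq_toReal_lintegral {α F : Type*} [MeasurableSpace α] {μ : Measure α}
    [NormedAddCommGroup F] [MeasurableSpace F] [OpensMeasurableSpace F] {f : α → F}
    (hf : AEMeasurable f μ) (n : ℕ) :
    ∫ x, ‖f x‖ ^ n ∂μ = (∫⁻ x, ‖f x‖ₑ ^ n ∂μ).toReal := by
  rw [← integral_toReal (hf.enorm.pow_const n)
    (.of_forall fun x => ENNReal.pow_lt_top enorm_lt_top)]
  simp only [ENNReal.toReal_pow, toReal_enorm]

theorem periodic_deriv {𝕜 F : Type*} [NontriviallyNormedField 𝕜] [NormedAddCommGroup F]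
    [NormedSpace 𝕜 F] {f : 𝕜 → F} {T : 𝕜} (hf : Function.Periodic f T) :
    Function.Periodic (deriv f) T := fun x => by
  rw [← deriv_comp_add_const, funext hf]

theorem circ_apply_zero (τ φ : ℝ) : circ τ φ 0 = τ * cos φ := rfl

theorem circ_apply_one (τ φ : ℝ) : circ τ φ 1 = τ * sin φ := rfl

theorem continuous_circ : Continuous fun q : ℝ × ℝ => circ q.1 q.2 := by
  refine (PiLp.continuous_toLp 2 _).comp <| continuous_pi <| Fin.forall_fin_two.2 ⟨?_, ?_⟩
  all_goals simp only [Matrix.cons_val_zero, Matrix.cons_val_one]; fun_prop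

theorem periodic_circ (τ : ℝ) : Function.Periodic (circ τ) (2 * π) := fun φ => by
  simp only [circ, cos_add_two_pi, sin_add_two_pi]

theorem norm_circ (τ φ : ℝ) : ‖circ τ φ‖ = |τ| := by
  rw [← sq_eq_sq₀ (norm_nonneg _) (abs_nonneg _), EuclideanSpace.norm_sq_eq, Fin.sum_univ_two,
    circ_apply_zero, circ_apply_one]
  simp only [norm_eq_abs, sq_abs]
  linear_combination τ ^ 2 * cos_sq_add_sin_sq φ

theorem hasDerivAt_circ (τ φ : ℝ) : HasDerivAt (circ τ) (circ τ (φ + π / 2)) φ := by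
  have h : HasDerivAt (fun ψ => ![τ * cos ψ, τ * sin ψ])
      ![τ * cos (φ + π / 2), τ * sin (φ + π / 2)] φ := by
    rw [cos_add_pi_div_two, sin_add_pi_div_two]
    exact hasDerivAt_pi.2 <| Fin.forall_fin_two.2
      ⟨(hasDerivAt_cos φ).const_mul τ, (hasDerivAt_sin φ).const_mul τ⟩
  exact (PiLp.hasFDerivAt_toLp (𝕜 := ℝ) 2 _).comp_hasDerivAt φ h

theorem enorm_deriv_comp_circ_le {F : Type*} [NormedAddCommGroup F] [NormedSpace ℝ F] {g : E2 → F}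
    {τ φ : ℝ} (hg : DifferentiableAt ℝ g (circ τ φ)) :
    ‖deriv (fun ψ => g (circ τ ψ)) φ‖ₑ ≤ ‖τ‖ₑ * ‖fderiv ℝ g (circ τ φ)‖ₑ := by
  have hderiv : deriv (fun ψ => g (circ τ ψ)) φ = fderiv ℝ g (circ τ φ) (circ τ (φ + π / 2)) :=
    (hg.hasFDerivAt.comp_hasDerivAt φ (hasDerivAt_circ τ φ)).deriv
  have hspeed : ‖circ τ (φ + π / 2)‖ₑ = ‖τ‖ₑ := enorm_eq_iff_norm_eq.2 (norm_circ τ _)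
  rw [hderiv, mul_comm, ← hspeed]
  exact ContinuousLinearMap.le_opENorm _ _

/-- The open annulus `B_b ∖ B̄_a` centered at the origin of the plane; for `a = 0` it is the
punctured disc. -/
abbrev annulus (a b : ℝ) : Set E2 := Metric.ball 0 b \ Metric.closedBall 0 a

theorem isOpen_annulus (a b : ℝ) : IsOpen (annulus a b) :=
  Metric.isOpen_ball.sdiff Metric.isClosed_closedBall

theorem circ_mem_annulus_iff {a b τ φ : ℝ} (hτ : 0 ≤ τ) :
    circ τ φ ∈ annulus a b ↔ τ ∈ Ioo a b := by
  rw [mem_sdiff, mem_ball_zero_iff, mem_closedBall_zero_iff, norm_circ, abs_of_nonneg hτ, not_le,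
    mem_Ioo, and_comm]

theorem measurePreserving_pt : MeasurePreserving fun q : ℝ × ℝ => pt q.1 q.2 :=
  (PiLp.volume_preserving_toLp (Fin 2)).comp (volume_preserving_finTwoArrow ℝ).symm

section PolarCoordinates

variable {h : E2 → ENNReal}

theorem lintegral_eq_lintegral_circ (hh : Measurable h) :
    ∫⁻ p, h p = ∫⁻ r in Ioi (0 : ℝ), ENNReal.ofReal r * ∫⁻ φ in Ioo (-π) π, h (circ r φ) := by
  have hpolar : Measurable fun q : ℝ × ℝ => ENNReal.ofReal q.1 * h (circ q.1 q.2) :=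
    measurable_fst.ennreal_ofReal.mul (hh.comp continuous_circ.measurable)
  calc ∫⁻ p, h p = ∫⁻ q : ℝ × ℝ, h (pt q.1 q.2) := (measurePreserving_pt.lintegral_comp hh).symm
    _ = ∫⁻ q in Ioi (0 : ℝ) ×ˢ Ioo (-π) π, ENNReal.ofReal q.1 * h (circ q.1 q.2) :=
        (lintegral_comp_polarCoord_symm fun q => h (pt q.1 q.2)).symm
    _ = ∫⁻ r in Ioi (0 : ℝ), ∫⁻ φ in Ioo (-π) π, ENNReal.ofReal r * h (circ r φ) :=
        setLIntegral_prod _ hpolar.aemeasurable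
    _ = _ := by simp only [lintegral_const_mul' _ _ ENNReal.ofReal_ne_top]

theorem setLIntegral_annulus_eq (hh : Measurable h) {a : ℝ} (ha : 0 ≤ a) (b : ℝ) :
    ∫⁻ p in annulus a b, h p =
      ∫⁻ r in Ioo a b, ENNReal.ofReal r * ∫⁻ φ in Ioo (-π) π, h (circ r φ) := by
  have hA := (isOpen_annulus a b).measurableSet
  have hsub : Ioo a b ⊆ Ioi 0 := fun r hr => ha.trans_lt hr.1
  rw [← lintegral_indicator hA, lintegral_eq_lintegral_circ (hh.indicator hA),
    ← inter_eq_left.2 hsub, ← setLIntegral_indicator measurableSet_Ioo]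
  refine setLIntegral_congr_fun measurableSet_Ioi fun r (hr : 0 < r) => ?_
  by_cases hrab : r ∈ Ioo a b <;> simp [indicator, circ_mem_annulus_iff hr.le, -mem_sdiff, hrab]

theorem exists_mul_lintegral_circ_le (hh : Measurable h) {a b : ℝ} (ha : 0 ≤ a)
    (hab : a < b) :
    ∃ τ ∈ Ioo a b, ENNReal.ofReal τ * ∫⁻ φ in Ioo (-π) π, h (circ τ φ) ≤
      (∫⁻ p in annulus a b, h p) / ENNReal.ofReal (b - a) := by
  have hmeas : Measurable fun r => ENNReal.ofReal r * ∫⁻ φ in Ioo (-π) π, h (circ r φ) :=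
    ENNReal.measurable_ofReal.mul (hh.comp continuous_circ.measurable).lintegral_prod_right'
  rw [setLIntegral_annulus_eq hh ha, ← Real.volume_Ioo, ← setLAverage_eq]
  exact exists_le_setLAverage (by simpa using hab) (by simp) hmeas.aemeasurable

end PolarCoordinates

section AngularDerivative

variable {F : Type*} [NormedAddCommGroup F] [NormedSpace ℝ F] [CompleteSpace F] {g : E2 → F}
  {a b : ℝ}

theorem exists_lintegral_enorm_deriv_comp_circ_sq_le (ha : 0 ≤ a) (hab : a < b)
    (hg : DifferentiableOn ℝ g (annulus a b)) :
    ∃ τ ∈ Ioo a b, ∫⁻ φ in Ioo (-π) π, ‖deriv (fun ψ => g (circ τ ψ)) φ‖ₑ ^ 2 ≤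
      ENNReal.ofReal (b / (b - a)) * ∫⁻ p in annulus a b, ‖fderiv ℝ g p‖ₑ ^ 2 := by
  obtain ⟨τ, hτ, hmean⟩ := exists_mul_lintegral_circ_le
    ((measurable_fderiv ℝ g).enorm.pow_const 2) ha hab
  have hτ0 : 0 ≤ τ := ha.trans hτ.1.le
  have hdiff (φ : ℝ) : DifferentiableAt ℝ g (circ τ φ) :=
    hg.differentiableAt ((isOpen_annulus a b).mem_nhds ((circ_mem_annulus_iff hτ0).2 hτ))
  refine ⟨τ, hτ, ?_⟩
  calc ∫⁻ φ in Ioo (-π) π, ‖deriv (fun ψ => g (circ τ ψ)) φ‖ₑ ^ 2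
      ≤ ∫⁻ φ in Ioo (-π) π, ENNReal.ofReal τ ^ 2 * ‖fderiv ℝ g (circ τ φ)‖ₑ ^ 2 := by
        refine lintegral_mono fun φ => ?_
        rw [← mul_pow, ← Real.enorm_of_nonneg hτ0]
        gcongr
        exact enorm_deriv_comp_circ_le (hdiff φ)
    _ = ENNReal.ofReal τ *
          (ENNReal.ofReal τ * ∫⁻ φ in Ioo (-π) π, ‖fderiv ℝ g (circ τ φ)‖ₑ ^ 2) := by
        rw [lintegral_const_mul' _ _ (by finiteness), sq, mul_assoc]
    _ ≤ ENNReal.ofReal b *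
          ((∫⁻ p in annulus a b, ‖fderiv ℝ g p‖ₑ ^ 2) / ENNReal.ofReal (b - a)) := by
        gcongr
        exact hτ.2.le
    _ = ENNReal.ofReal (b / (b - a)) * ∫⁻ p in annulus a b, ‖fderiv ℝ g p‖ₑ ^ 2 := by
        rw [ENNReal.ofReal_div_of_pos (sub_pos.2 hab), ENNReal.mul_comm_div]

theorem integral_norm_deriv_comp_circ_sq (g : E2 → F) (τ : ℝ) :
    ∫ φ in (0 : ℝ)..(2 * π), ‖deriv (fun ψ => g (circ τ ψ)) φ‖ ^ 2 =
      (∫⁻ φ in Ioo (-π) π, ‖deriv (fun ψ => g (circ τ ψ)) φ‖ₑ ^ 2).toReal := by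
  borelize F
  have hper : Function.Periodic (fun φ => ‖deriv (fun ψ => g (circ τ ψ)) φ‖ ^ 2) (2 * π) :=
    (periodic_deriv ((periodic_circ τ).comp g)).comp (‖·‖ ^ 2)
  have hshift := hper.intervalIntegral_add_eq 0 (-π)
  rw [zero_add, show -π + 2 * π = π by ring] at hshift
  rw [hshift, intervalIntegral.integral_of_le (by linarith [pi_pos]),
    integral_Ioc_eq_integral_Ioo,
    integral_norm_pow_eq_toReal_lintegral (measurable_deriv _).aemeasurable]

theorem angular_derivative_bound_general (ha : 0 ≤ a) (hab : a < b)
    (hg : DifferentiableOn ℝ g (annulus a b))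
    (hint : IntegrableOn (fun p => ‖fderiv ℝ g p‖ ^ 2) (annulus a b)) :
    ∃ τ ∈ Ioo a b, ∫ φ in (0 : ℝ)..(2 * π), ‖deriv (fun ψ => g (circ τ ψ)) φ‖ ^ 2 ≤
      b / (b - a) * ∫ p in annulus a b, ‖fderiv ℝ g p‖ ^ 2 := by
  obtain ⟨τ, hτ, hle⟩ := exists_lintegral_enorm_deriv_comp_circ_sq_le ha hab hg
  have hfinite : ∫⁻ p in annulus a b, ‖fderiv ℝ g p‖ₑ ^ 2 < ⊤ := by
    simpa only [HasFiniteIntegral, enorm_pow, enorm_norm] using hint.hasFiniteIntegral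
  have hratio : 0 ≤ b / (b - a) := div_nonneg (ha.trans hab.le) (sub_pos.2 hab).le
  refine ⟨τ, hτ, ?_⟩
  rw [integral_norm_deriv_comp_circ_sq,
    integral_norm_pow_eq_toReal_lintegral (measurable_fderiv ℝ g).aemeasurable,
    ← ENNReal.toReal_ofReal hratio, ← ENNReal.toReal_mul]
  exact ENNReal.toReal_mono (by finiteness) hle

end AngularDerivative

/-- Lemma 4.4 of the paper. For `g` continuously differentiable on the
annulus `A = B_{2ε} ∖ B̄_ε` with finite `H¹` norm, there is a radius `τ ∈ (ε, 2ε)` on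
whose circle the angular derivative of `g̃(r,φ) = g(r cos φ, r sin φ)` satisfies
`∫₀^{2π} |∂g̃/∂φ (τ,φ)|² dφ ≤ 4 ∫_A (|∇g|² + |g|²)`. -/
theorem angular_derivative_bound (ε : ℝ) (hε : 0 < ε) (g : E2 → ℂ)
    (hg : ContDiffOn ℝ 1 g (Metric.ball 0 (2 * ε) \ Metric.closedBall 0 ε))
    (hint : IntegrableOn (fun p => gradSq g p + ‖g p‖ ^ 2)
      (Metric.ball 0 (2 * ε) \ Metric.closedBall 0 ε)) :
    ∃ τ ∈ Set.Ioo ε (2 * ε),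
      ∫ φ in (0:ℝ)..(2 * π), ‖deriv (fun ψ => g (circ τ ψ)) φ‖ ^ 2
        ≤ 4 * ∫ p in Metric.ball (0 : E2) (2 * ε) \ Metric.closedBall 0 ε,
            (gradSq g p + ‖g p‖ ^ 2) := by
  have hle (p : E2) : ‖fderiv ℝ g p‖ ^ 2 ≤ gradSq g p + ‖g p‖ ^ 2 :=
    (norm_fderiv_sq_le_gradSq g p).trans (le_add_of_nonneg_right (sq_nonneg _))
  have hint' : IntegrableOn (fun p => ‖fderiv ℝ g p‖ ^ 2) (annulus ε (2 * ε)) :=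
    hint.mono' ((measurable_fderiv ℝ g).norm.pow_const 2).aestronglyMeasurable
      (.of_forall fun p => by simpa using hle p)
  obtain ⟨τ, hτ, hbound⟩ := angular_derivative_bound_general hε.le (by linarith)
    (hg.differentiableOn one_ne_zero) hint'
  refine ⟨τ, hτ, hbound.trans ?_⟩
  have hratio : 2 * ε / (2 * ε - ε) ≤ 4 := by
    rw [div_le_iff₀ (by linarith)]
    linarith
  exact mul_le_mul hratio (integral_mono hint' hint hle) (by positivity) (by norm_num)
end
end
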